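/- Let a, b, n be positive integers, let A and B be 2^n × 2^n complex matrices, let α, β > 0, let U_A be a unitary matrix indexed by Fin 2^a × Fin 2^n that is an exact α-block encoding of A, and let U_B be a unitary matrix indexed by Fin 2^b × Fin 2^n that is an exact β-block encoding of B. Then there exists a unitary matrix W indexed by Fin 2^a × Fin 2^b × Fin 2^n such that W((0,0,s₁),(0,0,s₂)) = (AB)_{s₁s₂}/(αβ) for all s₁,s₂ ∈ Fin 2^n; that is, W is an exact (αβ)-block encoding of the matrix product AB. -/

import Mathlib

open Matrix

/-- Given an exact `α`-block encoding `U_A` of `A` (on `a` ancilla qubits) and an exact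
`β`-block encoding `U_B` of `B` (on `b` ancilla qubits), there exists a unitary `W` (on
`a + b` ancilla qubits) that is an exact `(αβ)`-block encoding of the product `AB`. -/
theorem block_encoding_product (a b n : ℕ) (ha : 0 < a) (hb : 0 < b) (hn : 0 < n)
    (A B : Matrix (Fin (2 ^ n)) (Fin (2 ^ n)) ℂ)
    (α β : ℝ) (hα : 0 < α) (hβ : 0 < β)
    (UA : Matrix (Fin (2 ^ a) × Fin (2 ^ n)) (Fin (2 ^ a) × Fin (2 ^ n)) ℂ)
    (hUA : UA ∈ Matrix.unitaryGroup (Fin (2 ^ a) × Fin (2 ^ n)) ℂ)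
    (hUAA : ∀ s₁ s₂ : Fin (2 ^ n), UA (0, s₁) (0, s₂) = A s₁ s₂ / (α : ℂ))
    (UB : Matrix (Fin (2 ^ b) × Fin (2 ^ n)) (Fin (2 ^ b) × Fin (2 ^ n)) ℂ)
    (hUB : UB ∈ Matrix.unitaryGroup (Fin (2 ^ b) × Fin (2 ^ n)) ℂ)
    (hUBB : ∀ s₁ s₂ : Fin (2 ^ n), UB (0, s₁) (0, s₂) = B s₁ s₂ / (β : ℂ)) :
    ∃ W : Matrix (Fin (2 ^ a) × Fin (2 ^ b) × Fin (2 ^ n))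
        (Fin (2 ^ a) × Fin (2 ^ b) × Fin (2 ^ n)) ℂ,
      W ∈ Matrix.unitaryGroup (Fin (2 ^ a) × Fin (2 ^ b) × Fin (2 ^ n)) ℂ ∧
      ∀ s₁ s₂ : Fin (2 ^ n), W (0, 0, s₁) (0, 0, s₂) = (A * B) s₁ s₂ / ((α : ℂ) * β) := by
  let e : Fin (2 ^ a) × Fin (2 ^ b) × Fin (2 ^ n) ≃ Fin (2 ^ b) × Fin (2 ^ a) × Fin (2 ^ n) :=
    { toFun := fun x => (x.2.1, x.1, x.2.2)
      invFun := fun x => (x.2.1, x.1, x.2.2)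
      left_inv := fun _ => rfl
      right_inv := fun _ => rfl }
  have h1 : Matrix.kronecker (1 : Matrix (Fin (2 ^ b)) (Fin (2 ^ b)) ℂ) UA ∈
      Matrix.unitaryGroup (Fin (2 ^ b) × Fin (2 ^ a) × Fin (2 ^ n)) ℂ :=
    Matrix.kronecker_mem_unitary (one_mem _) hUA
  have h2 : Matrix.kronecker (1 : Matrix (Fin (2 ^ a)) (Fin (2 ^ a)) ℂ) UB ∈
      Matrix.unitaryGroup (Fin (2 ^ a) × Fin (2 ^ b) × Fin (2 ^ n)) ℂ :=
    Matrix.kronecker_mem_unitary (one_mem _) hUB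
  have h3 : (Matrix.kronecker (1 : Matrix (Fin (2 ^ b)) (Fin (2 ^ b)) ℂ) UA).submatrix e e ∈
      Matrix.unitaryGroup (Fin (2 ^ a) × Fin (2 ^ b) × Fin (2 ^ n)) ℂ := by
    rw [Matrix.mem_unitaryGroup_iff] at h1 ⊢
    rw [Matrix.star_eq_conjTranspose] at h1 ⊢
    rw [Matrix.conjTranspose_submatrix, Matrix.submatrix_mul_equiv, h1, Matrix.submatrix_one_equiv]
  refine ⟨_, mul_mem h3 h2, fun s₁ s₂ => ?_⟩
  simp only [Matrix.mul_apply, Fintype.sum_prod_type, Matrix.submatrix_apply, Matrix.kronecker,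
    Matrix.kroneckerMap_apply, e, Equiv.coe_fn_mk, Matrix.one_apply]
  rw [Finset.sum_eq_single 0, Finset.sum_eq_single 0]
  · simp only [if_true, one_mul, hUAA, hUBB, Finset.sum_div]
    exact Finset.sum_congr rfl fun _ _ => div_mul_div_comm _ _ _ _
  · intro i _ hi
    simp [hi.symm]
  · simp
  · intro i _ hi
    simp [hi]
  · simp
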